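/- Subject reduction for LHOπ: if P is a well-formed LHOπ process in the empty context (⊢ P) and P → Q, then Q is well-formed in the empty context (⊢ Q). -/

import Mathlib

/-!
Well-formedness never mentions channel names, and the way a context is split between the two premises
of a binary rule is commutative and associative. Hence, in every context, structurally congruent terms
are well-formed together (`SCP.wf_iff`): renaming of restricted channels, exchange of restrictions and
scope extrusion are invisible to the judgement, and the laws of parallel composition are the laws of
splitting (`LSplit.symm`, `LSplit.assoc`).

The empty context splits only into empty contexts, so a redex reached from a closed process through
parallel compositions and restrictions is itself closed. The value it transmits is therefore closed,
and a single substitution lemma for closed values suffices (`LWfP.subst`): such a value is unchanged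
by lifting (`LWfV.lift_eq`) and may be weakened to any context without linear variables
(`LWfV.weaken`). In particular, substituting it for a nonlinear variable, possibly below `!` and any
number of times, violates no linearity constraint, so the marker of the substituted variable
is immaterial.
-/


/-! Syntax of LHOπ / SHOπ processes and values (variables in de Bruijn style,
channels as names). -/

mutual
inductive Val : Type
  | star : Val
  | var : ℕ → Val
  | lam : Proc → Val
  | blam : Proc → Val
  | bang : Val → Val
inductive Proc : Type
  | nil : Proc
  | par : Proc → Proc → Proc
  | inp : ℕ → Proc → Proc
  | binp : ℕ → Proc → Proc
  | out : ℕ → Val → Proc → Proc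
  | nu : ℕ → Proc → Proc
  | app : Val → Val → Proc
end

/-! Lifting and capture-avoiding substitution. -/

mutual
def liftV (c : ℕ) : Val → Val
  | .star => .star
  | .var x => if x < c then .var x else .var (x + 1)
  | .lam P => .lam (liftP (c + 1) P)
  | .blam P => .blam (liftP (c + 1) P)
  | .bang V => .bang (liftV c V)
def liftP (c : ℕ) : Proc → Proc
  | .nil => .nil
  | .par P Q => .par (liftP c P) (liftP c Q)
  | .inp a P => .inp a (liftP (c + 1) P)
  | .binp a P => .binp a (liftP (c + 1) P)
  | .out a V P => .out a (liftV c V) (liftP c P)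
  | .nu a P => .nu a (liftP c P)
  | .app V W => .app (liftV c V) (liftV c W)
end

mutual
def substV (U : Val) (k : ℕ) : Val → Val
  | .star => .star
  | .var x => if x = k then U else if x < k then .var x else .var (x - 1)
  | .lam P => .lam (substP (liftV 0 U) (k + 1) P)
  | .blam P => .blam (substP (liftV 0 U) (k + 1) P)
  | .bang V => .bang (substV U k V)
def substP (U : Val) (k : ℕ) : Proc → Proc
  | .nil => .nil
  | .par P Q => .par (substP U k P) (substP U k Q)
  | .inp a P => .inp a (substP (liftV 0 U) (k + 1) P)
  | .binp a P => .binp a (substP (liftV 0 U) (k + 1) P)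
  | .out a V P => .out a (substV U k V) (substP U k P)
  | .nu a P => .nu a (substP U k P)
  | .app V W => .app (substV U k V) (substV U k W)
end

/-! Free channels and channel renaming (for α-conversion of restrictions). -/

mutual
def fcV : Val → Finset ℕ
  | .star => ∅
  | .var _ => ∅
  | .lam P => fcP P
  | .blam P => fcP P
  | .bang V => fcV V
def fcP : Proc → Finset ℕ
  | .nil => ∅
  | .par P Q => fcP P ∪ fcP Q
  | .inp a P => insert a (fcP P)
  | .binp a P => insert a (fcP P)
  | .out a V P => insert a (fcV V ∪ fcP P)
  | .nu a P => fcP P \ {a}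
  | .app V W => fcV V ∪ fcV W
end

mutual
def chV (a b : ℕ) : Val → Val
  | .star => .star
  | .var x => .var x
  | .lam P => .lam (chP a b P)
  | .blam P => .blam (chP a b P)
  | .bang V => .bang (chV a b V)
def chP (a b : ℕ) : Proc → Proc
  | .nil => .nil
  | .par P Q => .par (chP a b P) (chP a b Q)
  | .inp c P => .inp (if c = a then b else c) (chP a b P)
  | .binp c P => .binp (if c = a then b else c) (chP a b P)
  | .out c V P => .out (if c = a then b else c) (chV a b V) (chP a b P)
  | .nu c P => if c = a then .nu c P else .nu c (chP a b P)
  | .app V W => .app (chV a b V) (chV a b W)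
end

/-! Structural congruence: the smallest congruence containing α-equivalence
(for channel restrictions; α-equivalence of variables is syntactic identity in
de Bruijn style), associativity and commutativity of parallel composition,
exchange of restrictions, and scope extrusion.  No garbage-collection laws. -/

mutual
inductive SCV : Val → Val → Prop
  | refl (V) : SCV V V
  | symm : SCV V W → SCV W V
  | trans : SCV U V → SCV V W → SCV U W
  | lam : SCP P Q → SCV (.lam P) (.lam Q)
  | blam : SCP P Q → SCV (.blam P) (.blam Q)
  | bang : SCV V W → SCV (.bang V) (.bang W)
inductive SCP : Proc → Proc → Prop
  | refl (P) : SCP P P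
  | symm : SCP P Q → SCP Q P
  | trans : SCP P Q → SCP Q R → SCP P R
  | par : SCP P P' → SCP Q Q' → SCP (.par P Q) (.par P' Q')
  | inp : SCP P Q → SCP (.inp a P) (.inp a Q)
  | binp : SCP P Q → SCP (.binp a P) (.binp a Q)
  | out : SCV V W → SCP P Q → SCP (.out a V P) (.out a W Q)
  | nu : SCP P Q → SCP (.nu a P) (.nu a Q)
  | app : SCV V V' → SCV W W' → SCP (.app V W) (.app V' W')
  | assoc : SCP (.par P (.par Q R)) (.par (.par P Q) R)
  | comm : SCP (.par P Q) (.par Q P)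
  | nuswap : SCP (.nu a (.nu b P)) (.nu b (.nu a P))
  | extrude : a ∉ fcP Q → SCP (.nu a (.par P Q)) (.par (.nu a P) Q)
  | alpha : b ∉ fcP P → SCP (.nu a P) (.nu b (chP a b P))
end

/-! Reduction. -/

inductive Red : Proc → Proc → Prop
  | comm : Red (.par (.out a V P) (.inp a Q)) (.par P (substP V 0 Q))
  | bcomm : Red (.par (.out a (.bang V) P) (.binp a Q)) (.par P (substP V 0 Q))
  | beta : Red (.app (.lam P) V) (substP V 0 P)
  | bbeta : Red (.app (.blam P) (.bang V)) (substP V 0 P)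
  | parL : Red P Q → Red (.par P R) (.par Q R)
  | res : Red P Q → Red (.nu a P) (.nu a Q)
  | struct : SCP P P' → Red P' Q' → SCP Q' Q → Red P Q

/-- `m`-step reduction. -/
inductive RedN : ℕ → Proc → Proc → Prop
  | zero : RedN 0 P P
  | succ : Red P Q → RedN n Q R → RedN (n + 1) P R


/-! LHOπ well-formation.  A context entry is `none` (absent) or a marker:
linear `x` or nonlinear `!x`. -/

inductive LMark : Type
  | lin : LMark
  | bang : LMark
deriving DecidableEq

abbrev LCtx := List (Option LMark)

/-- Contexts made only of !-marked (or absent) variables. -/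
def BangOnly (Γ : LCtx) : Prop := ∀ e ∈ Γ, e = none ∨ e = some .bang

/-- Splitting one context entry between the two premises of a binary rule:
linear variables go to exactly one premise, !-marked variables may be shared
(implicit contraction). -/
inductive LSplitE : Option LMark → Option LMark → Option LMark → Prop
  | none : LSplitE none none none
  | linL : LSplitE (some .lin) (some .lin) none
  | linR : LSplitE (some .lin) none (some .lin)
  | bangL : LSplitE (some .bang) (some .bang) none
  | bangR : LSplitE (some .bang) none (some .bang)
  | bangB : LSplitE (some .bang) (some .bang) (some .bang)

inductive LSplit : LCtx → LCtx → LCtx → Prop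
  | nil : LSplit [] [] []
  | cons : LSplitE e e₁ e₂ → LSplit Γ Γ₁ Γ₂ →
      LSplit (e :: Γ) (e₁ :: Γ₁) (e₂ :: Γ₂)

mutual
inductive LWfV : LCtx → Val → Prop
  | star : BangOnly Γ → LWfV Γ .star
  | varLin : BangOnly Γ → LWfV (some .lin :: Γ) (.var 0)
  | varBang : BangOnly Γ → LWfV (some .bang :: Γ) (.var 0)
  | varThere : (e = none ∨ e = some LMark.bang) → LWfV Γ (.var x) →
      LWfV (e :: Γ) (.var (x + 1))
  | lam : LWfP (some .lin :: Γ) P → LWfV Γ (.lam P)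
  | blam : LWfP (some .bang :: Γ) P → LWfV Γ (.blam P)
  | bang : BangOnly Γ → LWfV Γ V → LWfV Γ (.bang V)
inductive LWfP : LCtx → Proc → Prop
  | nil : BangOnly Γ → LWfP Γ .nil
  | par : LSplit Γ Γ₁ Γ₂ → LWfP Γ₁ P → LWfP Γ₂ Q → LWfP Γ (.par P Q)
  | inp : LWfP (some .lin :: Γ) P → LWfP Γ (.inp a P)
  | binp : LWfP (some .bang :: Γ) P → LWfP Γ (.binp a P)
  | out : LSplit Γ Γ₁ Γ₂ → LWfV Γ₁ V → LWfP Γ₂ P → LWfP Γ (.out a V P)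
  | nu : LWfP Γ P → LWfP Γ (.nu a P)
  | app : LSplit Γ Γ₁ Γ₂ → LWfV Γ₁ V → LWfV Γ₂ W → LWfP Γ (.app V W)
end

/-! ### Context splitting -/

theorem BangOnly.append {Γ Δ : LCtx} (h₁ : BangOnly Γ) (h₂ : BangOnly Δ) : BangOnly (Γ ++ Δ) := by
  intro e he
  rcases List.mem_append.1 he with h | h
  exacts [h₁ e h, h₂ e h]

theorem BangOnly.left {Γ Δ : LCtx} (h : BangOnly (Γ ++ Δ)) : BangOnly Γ :=
  fun e he => h e (List.mem_append_left _ he)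

theorem BangOnly.cons {e : Option LMark} {Γ : LCtx} (he : e = none ∨ e = some .bang)
    (h : BangOnly Γ) : BangOnly (e :: Γ) := by
  intro e' he'
  rcases List.mem_cons.1 he' with rfl | h'
  exacts [he, h e' h']

theorem LSplitE.symm {e e₁ e₂ : Option LMark} (h : LSplitE e e₁ e₂) : LSplitE e e₂ e₁ := by
  cases h <;> constructor

theorem LSplit.symm {Γ Γ₁ Γ₂ : LCtx} (h : LSplit Γ Γ₁ Γ₂) : LSplit Γ Γ₂ Γ₁ := by
  induction h with
  | nil => exact .nil
  | cons he _ ih => exact .cons he.symm ih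

theorem LSplitE.assoc {e e₁ e₂ e₃ e₄ : Option LMark} (h : LSplitE e e₁ e₂)
    (h' : LSplitE e₂ e₃ e₄) : ∃ d, LSplitE e d e₄ ∧ LSplitE d e₁ e₃ := by
  cases h <;> cases h' <;>
    first
    | exact ⟨Option.none, by constructor, by constructor⟩
    | exact ⟨some .lin, by constructor, by constructor⟩
    | exact ⟨some .bang, by constructor, by constructor⟩

theorem LSplit.assoc {Γ Γ₁ Γ₂ Γ₃ Γ₄ : LCtx} (h : LSplit Γ Γ₁ Γ₂) (h' : LSplit Γ₂ Γ₃ Γ₄) :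
    ∃ Δ, LSplit Γ Δ Γ₄ ∧ LSplit Δ Γ₁ Γ₃ := by
  induction h generalizing Γ₃ Γ₄ with
  | nil => cases h'; exact ⟨[], .nil, .nil⟩
  | cons he _ ih =>
    cases h' with
    | cons he' h' =>
      obtain ⟨d, hd₁, hd₂⟩ := he.assoc he'
      obtain ⟨Δ, h₁, h₂⟩ := ih h'
      exact ⟨d :: Δ, .cons hd₁ h₁, .cons hd₂ h₂⟩

theorem LSplit.self {Δ : LCtx} (h : BangOnly Δ) : LSplit Δ Δ Δ := by
  induction Δ with
  | nil => exact .nil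
  | cons e Δ ih =>
    refine .cons ?_ (ih fun e' he' => h e' (List.mem_cons_of_mem _ he'))
    rcases h e List.mem_cons_self with rfl | rfl <;> constructor

theorem LSplit.append {Γ Γ₁ Γ₂ Δ : LCtx} (h : LSplit Γ Γ₁ Γ₂) (hΔ : BangOnly Δ) :
    LSplit (Γ ++ Δ) (Γ₁ ++ Δ) (Γ₂ ++ Δ) := by
  induction h with
  | nil => exact LSplit.self hΔ
  | cons he _ ih => exact .cons he ih

theorem LSplit.length_eq {Γ Γ₁ Γ₂ : LCtx} (h : LSplit Γ Γ₁ Γ₂) :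
    Γ₁.length = Γ.length ∧ Γ₂.length = Γ.length := by
  induction h with
  | nil => simp
  | cons _ _ ih => simp [ih]

theorem LSplit.snoc_inv {Γ Γ₁ Γ₂ : LCtx} {m : Option LMark} (h : LSplit (Γ ++ [m]) Γ₁ Γ₂) :
    ∃ Δ₁ Δ₂ m₁ m₂, Γ₁ = Δ₁ ++ [m₁] ∧ Γ₂ = Δ₂ ++ [m₂] ∧ LSplit Γ Δ₁ Δ₂ := by
  induction Γ generalizing Γ₁ Γ₂ with
  | nil =>
    cases h with
    | cons he h => cases h; exact ⟨[], [], _, _, rfl, rfl, .nil⟩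
  | cons e Γ ih =>
    cases h with
    | cons he h =>
      obtain ⟨Δ₁, Δ₂, m₁, m₂, rfl, rfl, hs⟩ := ih h
      exact ⟨_ :: Δ₁, _ :: Δ₂, m₁, m₂, rfl, rfl, .cons he hs⟩

/-! ### Closed values: weakening and lifting -/

mutual
theorem LWfV.weaken {Γ Δ : LCtx} (hΔ : BangOnly Δ) {V : Val} (h : LWfV Γ V) :
    LWfV (Γ ++ Δ) V := by
  cases h with
  | star h => exact .star (h.append hΔ)
  | varLin h => exact .varLin (h.append hΔ)
  | varBang h => exact .varBang (h.append hΔ)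
  | varThere he h => exact .varThere he (LWfV.weaken hΔ h)
  | lam h => exact .lam (LWfP.weaken hΔ h)
  | blam h => exact .blam (LWfP.weaken hΔ h)
  | bang hb h => exact .bang (hb.append hΔ) (LWfV.weaken hΔ h)
theorem LWfP.weaken {Γ Δ : LCtx} (hΔ : BangOnly Δ) {P : Proc} (h : LWfP Γ P) :
    LWfP (Γ ++ Δ) P := by
  cases h with
  | nil h => exact .nil (h.append hΔ)
  | par s h₁ h₂ => exact .par (s.append hΔ) (LWfP.weaken hΔ h₁) (LWfP.weaken hΔ h₂)
  | inp h => exact .inp (LWfP.weaken hΔ h)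
  | binp h => exact .binp (LWfP.weaken hΔ h)
  | out s h₁ h₂ => exact .out (s.append hΔ) (LWfV.weaken hΔ h₁) (LWfP.weaken hΔ h₂)
  | nu h => exact .nu (LWfP.weaken hΔ h)
  | app s h₁ h₂ => exact .app (s.append hΔ) (LWfV.weaken hΔ h₁) (LWfV.weaken hΔ h₂)
end

theorem LWfV.var_lt {Γ : LCtx} {x : ℕ} (h : LWfV Γ (.var x)) : x < Γ.length := by
  induction x generalizing Γ with
  | zero => cases h <;> simp
  | succ x ih =>
    cases h with
    | varThere _ h => simpa using ih h

mutual
/-- Lifting past the whole context does nothing, as there are no free variables to shift. -/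
theorem LWfV.lift_eq {Γ : LCtx} {c : ℕ} {V : Val} (h : LWfV Γ V) (hc : Γ.length ≤ c) :
    liftV c V = V := by
  cases V with
  | star => rfl
  | var x => simp [liftV, h.var_lt.trans_le hc]
  | lam P => cases h with | lam h => simp [liftV, LWfP.lift_eq h (Nat.succ_le_succ hc)]
  | blam P => cases h with | blam h => simp [liftV, LWfP.lift_eq h (Nat.succ_le_succ hc)]
  | bang V => cases h with | bang _ h => simp [liftV, LWfV.lift_eq h hc]
theorem LWfP.lift_eq {Γ : LCtx} {c : ℕ} {P : Proc} (h : LWfP Γ P) (hc : Γ.length ≤ c) :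
    liftP c P = P := by
  cases P with
  | nil => rfl
  | par P Q =>
    cases h with
    | par s h₁ h₂ =>
      simp [liftP, LWfP.lift_eq h₁ (s.length_eq.1.trans_le hc),
        LWfP.lift_eq h₂ (s.length_eq.2.trans_le hc)]
  | inp a P => cases h with | inp h => simp [liftP, LWfP.lift_eq h (Nat.succ_le_succ hc)]
  | binp a P => cases h with | binp h => simp [liftP, LWfP.lift_eq h (Nat.succ_le_succ hc)]
  | out a V P =>
    cases h with
    | out s h₁ h₂ =>
      simp [liftP, LWfV.lift_eq h₁ (s.length_eq.1.trans_le hc),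
        LWfP.lift_eq h₂ (s.length_eq.2.trans_le hc)]
  | nu a P => cases h with | nu h => simp [liftP, LWfP.lift_eq h hc]
  | app V W =>
    cases h with
    | app s h₁ h₂ =>
      simp [liftP, LWfV.lift_eq h₁ (s.length_eq.1.trans_le hc),
        LWfV.lift_eq h₂ (s.length_eq.2.trans_le hc)]
end

/-! ### Inversion of well-formedness -/

theorem lwfV_star_iff {Γ : LCtx} : LWfV Γ .star ↔ BangOnly Γ :=
  ⟨fun h => by cases h; assumption, .star⟩

theorem lwfP_nil_iff {Γ : LCtx} : LWfP Γ .nil ↔ BangOnly Γ :=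
  ⟨fun h => by cases h; assumption, .nil⟩

theorem lwfV_lam_iff {Γ : LCtx} {P : Proc} : LWfV Γ (.lam P) ↔ LWfP (some .lin :: Γ) P :=
  ⟨fun h => by cases h; assumption, .lam⟩

theorem lwfV_blam_iff {Γ : LCtx} {P : Proc} : LWfV Γ (.blam P) ↔ LWfP (some .bang :: Γ) P :=
  ⟨fun h => by cases h; assumption, .blam⟩

theorem lwfV_bang_iff {Γ : LCtx} {V : Val} : LWfV Γ (.bang V) ↔ BangOnly Γ ∧ LWfV Γ V :=
  ⟨fun h => by cases h; constructor <;> assumption, fun h => .bang h.1 h.2⟩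

theorem lwfP_inp_iff {Γ : LCtx} {a : ℕ} {P : Proc} :
    LWfP Γ (.inp a P) ↔ LWfP (some .lin :: Γ) P :=
  ⟨fun h => by cases h; assumption, .inp⟩

theorem lwfP_binp_iff {Γ : LCtx} {a : ℕ} {P : Proc} :
    LWfP Γ (.binp a P) ↔ LWfP (some .bang :: Γ) P :=
  ⟨fun h => by cases h; assumption, .binp⟩

theorem lwfP_nu_iff {Γ : LCtx} {a : ℕ} {P : Proc} : LWfP Γ (.nu a P) ↔ LWfP Γ P :=
  ⟨fun h => by cases h; assumption, .nu⟩

theorem lwfP_par_iff {Γ : LCtx} {P Q : Proc} :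
    LWfP Γ (.par P Q) ↔ ∃ Γ₁ Γ₂, LSplit Γ Γ₁ Γ₂ ∧ LWfP Γ₁ P ∧ LWfP Γ₂ Q :=
  ⟨fun h => by cases h with | par s h₁ h₂ => exact ⟨_, _, s, h₁, h₂⟩,
    fun ⟨_, _, s, h₁, h₂⟩ => .par s h₁ h₂⟩

theorem lwfP_out_iff {Γ : LCtx} {a : ℕ} {V : Val} {P : Proc} :
    LWfP Γ (.out a V P) ↔ ∃ Γ₁ Γ₂, LSplit Γ Γ₁ Γ₂ ∧ LWfV Γ₁ V ∧ LWfP Γ₂ P :=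
  ⟨fun h => by cases h with | out s h₁ h₂ => exact ⟨_, _, s, h₁, h₂⟩,
    fun ⟨_, _, s, h₁, h₂⟩ => .out s h₁ h₂⟩

theorem lwfP_app_iff {Γ : LCtx} {V W : Val} :
    LWfP Γ (.app V W) ↔ ∃ Γ₁ Γ₂, LSplit Γ Γ₁ Γ₂ ∧ LWfV Γ₁ V ∧ LWfV Γ₂ W :=
  ⟨fun h => by cases h with | app s h₁ h₂ => exact ⟨_, _, s, h₁, h₂⟩,
    fun ⟨_, _, s, h₁, h₂⟩ => .app s h₁ h₂⟩

/-! ### Substitution of closed values -/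

/-- A variable judgement in a context with last entry `m` either refers to that entry, and the
remaining context has no linear variable, or it survives the removal of the entry. -/
theorem LWfV.var_snoc_inv {Γ : LCtx} {m : Option LMark} {x : ℕ} (h : LWfV (Γ ++ [m]) (.var x)) :
    (x = Γ.length ∧ BangOnly Γ) ∨ (x < Γ.length ∧ LWfV Γ (.var x)) := by
  induction Γ generalizing x with
  | nil =>
    have := h.var_lt
    exact .inl ⟨by simpa using this, by simp [BangOnly]⟩
  | cons e Γ ih =>
    rw [List.cons_append] at h
    cases h with
    | varLin h => exact .inr ⟨by simp, .varLin h.left⟩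
    | varBang h => exact .inr ⟨by simp, .varBang h.left⟩
    | varThere he h =>
      rcases ih h with ⟨rfl, hb⟩ | ⟨hx, hv⟩
      · exact .inl ⟨by simp, hb.cons he⟩
      · exact .inr ⟨by simpa using hx, .varThere he hv⟩

mutual
theorem LWfV.subst {U : Val} (hU : LWfV [] U) {Γ : LCtx} {m : Option LMark} {k : ℕ}
    (hk : Γ.length = k) {V : Val} (h : LWfV (Γ ++ [m]) V) : LWfV Γ (substV U k V) := by
  have hl : liftV 0 U = U := hU.lift_eq (by simp)
  cases V with
  | star => exact .star (lwfV_star_iff.1 h).left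
  | var x =>
    rcases h.var_snoc_inv with ⟨hx, hb⟩ | ⟨hx, hv⟩
    · simpa [substV, hx, hk] using LWfV.weaken hb hU
    · have h₁ : x < k := hk ▸ hx
      simpa [substV, h₁, h₁.ne] using hv
  | lam P =>
    rw [substV, hl]
    exact .lam (LWfP.subst (Γ := _ :: Γ) hU (by simp [hk]) (lwfV_lam_iff.1 h))
  | blam P =>
    rw [substV, hl]
    exact .blam (LWfP.subst (Γ := _ :: Γ) hU (by simp [hk]) (lwfV_blam_iff.1 h))
  | bang V =>
    obtain ⟨hb, h⟩ := lwfV_bang_iff.1 h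
    exact .bang hb.left (LWfV.subst hU hk h)
/-- Substitution of a closed value for the outermost variable. The marker `m` of that variable is
arbitrary; it may be `none`, as happens to a premise that does not receive the variable. -/
theorem LWfP.subst {U : Val} (hU : LWfV [] U) {Γ : LCtx} {m : Option LMark} {k : ℕ}
    (hk : Γ.length = k) {P : Proc} (h : LWfP (Γ ++ [m]) P) : LWfP Γ (substP U k P) := by
  have hl : liftV 0 U = U := hU.lift_eq (by simp)
  cases P with
  | nil => exact .nil (lwfP_nil_iff.1 h).left
  | par P Q =>
    obtain ⟨_, _, s, h₁, h₂⟩ := lwfP_par_iff.1 h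
    obtain ⟨Δ₁, Δ₂, m₁, m₂, rfl, rfl, t⟩ := s.snoc_inv
    exact .par t (LWfP.subst hU (t.length_eq.1.trans hk) h₁)
      (LWfP.subst hU (t.length_eq.2.trans hk) h₂)
  | inp a P =>
    rw [substP, hl]
    exact .inp (LWfP.subst (Γ := _ :: Γ) hU (by simp [hk]) (lwfP_inp_iff.1 h))
  | binp a P =>
    rw [substP, hl]
    exact .binp (LWfP.subst (Γ := _ :: Γ) hU (by simp [hk]) (lwfP_binp_iff.1 h))
  | out a V P =>
    obtain ⟨_, _, s, h₁, h₂⟩ := lwfP_out_iff.1 h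
    obtain ⟨Δ₁, Δ₂, m₁, m₂, rfl, rfl, t⟩ := s.snoc_inv
    exact .out t (LWfV.subst hU (t.length_eq.1.trans hk) h₁)
      (LWfP.subst hU (t.length_eq.2.trans hk) h₂)
  | nu a P => exact .nu (LWfP.subst hU hk (lwfP_nu_iff.1 h))
  | app V W =>
    obtain ⟨_, _, s, h₁, h₂⟩ := lwfP_app_iff.1 h
    obtain ⟨Δ₁, Δ₂, m₁, m₂, rfl, rfl, t⟩ := s.snoc_inv
    exact .app t (LWfV.subst hU (t.length_eq.1.trans hk) h₁)
      (LWfV.subst hU (t.length_eq.2.trans hk) h₂)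
end

/-! ### Structural congruence -/

mutual
theorem lwfV_chV_iff (a b : ℕ) (V : Val) (Γ : LCtx) : LWfV Γ (chV a b V) ↔ LWfV Γ V := by
  cases V with
  | star => rw [chV]
  | var x => rw [chV]
  | lam P => rw [chV, lwfV_lam_iff, lwfV_lam_iff, lwfP_chP_iff a b P]
  | blam P => rw [chV, lwfV_blam_iff, lwfV_blam_iff, lwfP_chP_iff a b P]
  | bang V => rw [chV, lwfV_bang_iff, lwfV_bang_iff, lwfV_chV_iff a b V]
/-- Renaming a channel does not affect well-formedness. No freshness is needed, since capture of
channel names is invisible to the judgement. -/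
theorem lwfP_chP_iff (a b : ℕ) (P : Proc) (Γ : LCtx) : LWfP Γ (chP a b P) ↔ LWfP Γ P := by
  cases P with
  | nil => rw [chP]
  | par P Q => simp only [chP, lwfP_par_iff, lwfP_chP_iff a b P, lwfP_chP_iff a b Q]
  | inp c P => rw [chP, lwfP_inp_iff, lwfP_inp_iff, lwfP_chP_iff a b P]
  | binp c P => rw [chP, lwfP_binp_iff, lwfP_binp_iff, lwfP_chP_iff a b P]
  | out c V P => simp only [chP, lwfP_out_iff, lwfV_chV_iff a b V, lwfP_chP_iff a b P]
  | nu c P =>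
    rw [chP]
    split_ifs
    · rfl
    · rw [lwfP_nu_iff, lwfP_nu_iff, lwfP_chP_iff a b P]
  | app V W => simp only [chP, lwfP_app_iff, lwfV_chV_iff a b V, lwfV_chV_iff a b W]
end

theorem LWfP.par_comm {Γ : LCtx} {P Q : Proc} (h : LWfP Γ (.par P Q)) : LWfP Γ (.par Q P) := by
  cases h with
  | par s h₁ h₂ => exact .par s.symm h₂ h₁

theorem LWfP.par_assoc {Γ : LCtx} {P Q R : Proc} (h : LWfP Γ (.par P (.par Q R))) :
    LWfP Γ (.par (.par P Q) R) := by
  cases h with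
  | par s h₁ h₂ =>
    cases h₂ with
    | par s' h₂ h₃ =>
      obtain ⟨Δ, t, t'⟩ := s.assoc s'
      exact .par t (.par t' h₁ h₂) h₃

/-- The converse of `LWfP.par_assoc` is an instance of it, up to commutativity. -/
theorem LWfP.par_assoc_symm {Γ : LCtx} {P Q R : Proc} (h : LWfP Γ (.par (.par P Q) R)) :
    LWfP Γ (.par P (.par Q R)) :=
  h.par_comm.par_assoc.par_comm.par_assoc.par_comm

mutual
theorem SCV.wf_iff : ∀ {V W : Val}, SCV V W → ∀ Γ : LCtx, LWfV Γ V ↔ LWfV Γ W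
  | _, _, .refl _, _ => Iff.rfl
  | _, _, .symm s, Γ => (SCV.wf_iff s Γ).symm
  | _, _, .trans s t, Γ => (SCV.wf_iff s Γ).trans (SCV.wf_iff t Γ)
  | _, _, .lam s, Γ => by simp only [lwfV_lam_iff, SCP.wf_iff s]
  | _, _, .blam s, Γ => by simp only [lwfV_blam_iff, SCP.wf_iff s]
  | _, _, .bang s, Γ => by simp only [lwfV_bang_iff, SCV.wf_iff s]
theorem SCP.wf_iff : ∀ {P Q : Proc}, SCP P Q → ∀ Γ : LCtx, LWfP Γ P ↔ LWfP Γ Q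
  | _, _, .refl _, _ => Iff.rfl
  | _, _, .symm s, Γ => (SCP.wf_iff s Γ).symm
  | _, _, .trans s t, Γ => (SCP.wf_iff s Γ).trans (SCP.wf_iff t Γ)
  | _, _, .par s t, Γ => by simp only [lwfP_par_iff, SCP.wf_iff s, SCP.wf_iff t]
  | _, _, .inp s, Γ => by simp only [lwfP_inp_iff, SCP.wf_iff s]
  | _, _, .binp s, Γ => by simp only [lwfP_binp_iff, SCP.wf_iff s]
  | _, _, .out s t, Γ => by simp only [lwfP_out_iff, SCV.wf_iff s, SCP.wf_iff t]
  | _, _, .nu s, Γ => by simp only [lwfP_nu_iff, SCP.wf_iff s]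
  | _, _, .app s t, Γ => by simp only [lwfP_app_iff, SCV.wf_iff s, SCV.wf_iff t]
  | _, _, .assoc, _ => ⟨.par_assoc, .par_assoc_symm⟩
  | _, _, .comm, _ => ⟨.par_comm, .par_comm⟩
  | _, _, .nuswap, _ => by simp only [lwfP_nu_iff]
  | _, _, .extrude _, _ => by simp only [lwfP_nu_iff, lwfP_par_iff]
  | _, _, .alpha _, _ => by simp only [lwfP_nu_iff, lwfP_chP_iff]
end

/-! ### Reduction of closed processes -/

/-- Subject reduction for LHOπ: well-formedness in the empty context is
preserved by reduction. -/
theorem lhopi_subject_reduction {P Q : Proc} (h : LWfP [] P) (r : Red P Q) :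
    LWfP [] Q := by
  induction r with
  | comm =>
    cases h with
    | par s h₁ h₂ =>
      cases s
      cases h₁ with
      | out s hV hP =>
        cases s
        cases h₂ with
        | inp hQ => exact .par .nil hP (LWfP.subst (Γ := []) hV rfl hQ)
  | bcomm =>
    cases h with
    | par s h₁ h₂ =>
      cases s
      cases h₁ with
      | out s hV hP =>
        cases s
        cases hV with
        | bang _ hV =>
          cases h₂ with
          | binp hQ => exact .par .nil hP (LWfP.subst (Γ := []) hV rfl hQ)
  | beta =>
    cases h with
    | app s h₁ hV =>
      cases s
      cases h₁ with
      | lam hP => exact LWfP.subst (Γ := []) hV rfl hP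
  | bbeta =>
    cases h with
    | app s h₁ hV =>
      cases s
      cases h₁ with
      | blam hP =>
        cases hV with
        | bang _ hV => exact LWfP.subst (Γ := []) hV rfl hP
  | parL _ ih =>
    cases h with
    | par s h₁ h₂ =>
      cases s
      exact .par .nil (ih h₁) h₂
  | res _ ih =>
    cases h with
    | nu h => exact .nu (ih h)
  | struct s _ t ih => exact (t.wf_iff []).1 (ih ((s.wf_iff []).1 h))
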